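/- arXiv:1401.1044 — 4 statements merged into one kernel-verified Lean document; each statement's English description precedes it below -/
import Mathlib

section
/- Let C be a model category and f, g : X → Y two morphisms of C which are homotopic. Then the images of f and g under the localization functor l : C → Ho(C) are equal, where Ho(C) = W⁻¹C is the localization of C at the class W of weak equivalences. -/
open CategoryTheory CategoryTheory.Limits

universe v v' u u'

/-- `f` is a retract of `g`: there are morphisms `i, r, j, s` exhibiting the arrow `f`
as a retract of the arrow `g` in the arrow category. -/
def IsRetractOf {C : Type u} [Category.{v} C] {X Y X' Y' : C}
    (f : X ⟶ Y) (g : X' ⟶ Y') : Prop :=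
  ∃ (i : X ⟶ X') (r : X' ⟶ X) (j : Y ⟶ Y') (s : Y' ⟶ Y),
    i ≫ r = 𝟙 X ∧ j ≫ s = 𝟙 Y ∧ i ≫ g = f ≫ j ∧ g ≫ s = r ≫ f

/-- A model category structure (in the sense of Quillen) on a category `C`:
weak equivalences `W`, fibrations `Fib` and cofibrations `Cof`, satisfying
two-out-of-three, stability under composition and retracts, the lifting axioms,
and the factorization axioms. (The category `C` is moreover assumed to be complete
and cocomplete, via the `HasLimits`/`HasColimits` instances in the statements.) -/
structure ModelStructure (C : Type u) [Category.{v} C] where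
  W : MorphismProperty C
  Fib : MorphismProperty C
  Cof : MorphismProperty C
  /-- two-out-of-three, part 1 -/
  W_comp : ∀ {X Y Z : C} (f : X ⟶ Y) (g : Y ⟶ Z), W f → W g → W (f ≫ g)
  /-- two-out-of-three, part 2 -/
  W_of_comp_right : ∀ {X Y Z : C} (f : X ⟶ Y) (g : Y ⟶ Z), W (f ≫ g) → W g → W f
  /-- two-out-of-three, part 3 -/
  W_of_comp_left : ∀ {X Y Z : C} (f : X ⟶ Y) (g : Y ⟶ Z), W (f ≫ g) → W f → W g
  Fib_comp : ∀ {X Y Z : C} (f : X ⟶ Y) (g : Y ⟶ Z), Fib f → Fib g → Fib (f ≫ g)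
  Cof_comp : ∀ {X Y Z : C} (f : X ⟶ Y) (g : Y ⟶ Z), Cof f → Cof g → Cof (f ≫ g)
  W_retract : ∀ {X Y X' Y' : C} (f : X ⟶ Y) (g : X' ⟶ Y'), IsRetractOf f g → W g → W f
  Fib_retract : ∀ {X Y X' Y' : C} (f : X ⟶ Y) (g : X' ⟶ Y'), IsRetractOf f g → Fib g → Fib f
  Cof_retract : ∀ {X Y X' Y' : C} (f : X ⟶ Y) (g : X' ⟶ Y'), IsRetractOf f g → Cof g → Cof f
  /-- lifting axiom: cofibrations have the left lifting property against trivial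
  fibrations and trivial cofibrations against fibrations -/
  lifting : ∀ {A B X Y : C} (i : A ⟶ B) (p : X ⟶ Y), Cof i → Fib p → (W i ∨ W p) →
    ∀ (f : A ⟶ X) (g : B ⟶ Y), f ≫ p = i ≫ g → ∃ h : B ⟶ X, i ≫ h = f ∧ h ≫ p = g
  /-- factorization as a trivial cofibration followed by a fibration -/
  factorization_trivCof_fib : ∀ {X Y : C} (f : X ⟶ Y), ∃ (Z : C) (i : X ⟶ Z) (p : Z ⟶ Y),
    Cof i ∧ W i ∧ Fib p ∧ i ≫ p = f
  /-- factorization as a cofibration followed by a trivial fibration -/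
  factorization_cof_trivFib : ∀ {X Y : C} (f : X ⟶ Y), ∃ (Z : C) (i : X ⟶ Z) (p : Z ⟶ Y),
    Cof i ∧ Fib p ∧ W p ∧ i ≫ p = f

namespace ModelStructure

variable {C : Type u} [Category.{v} C]

/-- An object `X` is cofibrant if `∅ ⟶ X` is a cofibration. -/
def Cofibrant [HasColimits C] (M : ModelStructure C) (X : C) : Prop :=
  M.Cof (initial.to X)

/-- An object `X` is fibrant if `X ⟶ *` is a fibration. -/
def Fibrant [HasLimits C] (M : ModelStructure C) (X : C) : Prop :=
  M.Fib (terminal.from X)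

/-- Two morphisms `f g : X ⟶ Y` are homotopic if there is a cylinder-like object `CX`
with `i j : X ⟶ CX`, a trivial fibration `p : CX ⟶ X` with `i ≫ p = j ≫ p = 𝟙 X`, such that
the induced morphism `X ⨿ X ⟶ CX` is a cofibration, together with `h : CX ⟶ Y` with
`i ≫ h = f` and `j ≫ h = g`. -/
def Homotopic [HasColimits C] (M : ModelStructure C) {X Y : C} (f g : X ⟶ Y) : Prop :=
  ∃ (CX : C) (i j : X ⟶ CX) (p : CX ⟶ X) (h : CX ⟶ Y),
    M.Fib p ∧ M.W p ∧ i ≫ p = 𝟙 X ∧ j ≫ p = 𝟙 X ∧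
    M.Cof (coprod.desc i j) ∧ i ≫ h = f ∧ j ≫ h = g

end ModelStructure

section LeftHomotopy

open HomotopicalAlgebra

variable {C : Type u} [Category.{v} C] {X Y : C} {f g : X ⟶ Y}

theorem map_precylinder_i₀_eq_map_i₁ {D : Type u'} [Category.{v'} D] (P : Precylinder X)
    (F : C ⥤ D) [Mono (F.map P.π)] : F.map P.i₀ = F.map P.i₁ := by
  rw [← cancel_mono (F.map P.π), ← F.map_comp, ← F.map_comp, P.i₀_π, P.i₁_π]

theorem statement1_general {D : Type u'} [Category.{v'} D] {W : MorphismProperty C}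
    {P : Precylinder X} (H : P.LeftHomotopy f g) (hP : W P.π)
    (F : C ⥤ D) (hF : W.IsInvertedBy F) : F.map f = F.map g := by
  have : IsIso (F.map P.π) := hF P.π hP
  calc
    F.map f = F.map P.i₀ ≫ F.map H.h := by rw [← F.map_comp, H.h₀]
    _ = F.map P.i₁ ≫ F.map H.h := by rw [map_precylinder_i₀_eq_map_i₁]
    _ = F.map g := by rw [← F.map_comp, H.h₁]

theorem ModelStructure.Homotopic.exists_leftHomotopy [HasColimits C] {M : ModelStructure C}
    (h : M.Homotopic f g) : ∃ P : Precylinder X, M.W P.π ∧ Nonempty (P.LeftHomotopy f g) := by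
  obtain ⟨CX, i, j, p, k, _, hp, hi, hj, _, hf, hg⟩ := h
  exact ⟨⟨CX, i, j, p, hi, hj⟩, hp, ⟨⟨k, hf, hg⟩⟩⟩

end LeftHomotopy

/-- Let `C` be a model category and `f, g : X ⟶ Y` two homotopic morphisms
of `C`. Then the images of `f` and `g` under the localization functor
`l : C ⥤ Ho(C) = W⁻¹C` are equal. -/
theorem statement1 {C : Type u} [Category.{v} C] [HasLimits C] [HasColimits C]
    (M : ModelStructure C) {X Y : C} (f g : X ⟶ Y) (h : M.Homotopic f g) :
    M.W.Q.map f = M.W.Q.map g := by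
  obtain ⟨_, hP, ⟨H⟩⟩ := h.exists_leftHomotopy
  exact statement1_general H hP M.W.Q M.W.Q_inverts
end

section
/- Let C be a model category, X a cofibrant object and Y a fibrant object of C. Then the localization functor l : C → Ho(C) induces a bijection from the quotient Hom_C(X, Y)/~ of the set of morphisms from X to Y by the homotopy relation onto the set Hom_{Ho(C)}(l(X), l(Y)) of morphisms in the homotopy category. -/
open CategoryTheory CategoryTheory.Limits

universe v v' u u'

/-!
By the fundamental lemma of homotopical algebra, morphisms from a cofibrant object to a fibrant
object `Y` become equal in the homotopy category exactly when they are homotopic through some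
cylinder `X ⨿ X ⟶ I ⟶ X` whose projection is merely a weak equivalence. Factoring `X ⨿ X ⟶ I` as a
cofibration followed by a trivial fibration makes the inclusion a cofibration. Factoring the
resulting projection as a trivial cofibration followed by a fibration makes it a trivial fibration,
and the homotopy extends along the trivial cofibration because `Y` is fibrant.
-/

lemma IsRetractOf.of_retractArrow {C : Type u} [Category.{v} C] {X Y X' Y' : C}
    {f : X ⟶ Y} {g : X' ⟶ Y'} (h : RetractArrow f g) : IsRetractOf f g :=
  ⟨h.i.left, h.r.left, h.i.right, h.r.right, h.retract_left, h.retract_right, h.i_w, h.r_w.symm⟩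

namespace ModelStructure

open HomotopicalAlgebra

variable {C : Type u} [Category.{v} C] (M : ModelStructure C)

instance hasTwoOutOfThreeProperty_W : M.W.HasTwoOutOfThreeProperty where
  comp_mem := M.W_comp
  of_postcomp f g hg hfg := M.W_of_comp_right f g hfg hg
  of_precomp f g hf hfg := M.W_of_comp_left f g hfg hf

instance isStableUnderRetracts_W : M.W.IsStableUnderRetracts where
  of_retract h := M.W_retract _ _ (.of_retractArrow h)

instance isStableUnderRetracts_Fib : M.Fib.IsStableUnderRetracts where
  of_retract h := M.Fib_retract _ _ (.of_retractArrow h)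

instance isStableUnderRetracts_Cof : M.Cof.IsStableUnderRetracts where
  of_retract h := M.Cof_retract _ _ (.of_retractArrow h)

instance hasFactorization_trivCof_fib : (M.Cof ⊓ M.W).HasFactorization M.Fib where
  nonempty_mapFactorizationData f :=
    let ⟨Z, i, p, hi, hi', hp, fac⟩ := M.factorization_trivCof_fib f
    ⟨Z, i, p, fac, ⟨hi, hi'⟩, hp⟩

instance hasFactorization_cof_trivFib : M.Cof.HasFactorization (M.Fib ⊓ M.W) where
  nonempty_mapFactorizationData f :=
    let ⟨Z, i, p, hi, hp, hp', fac⟩ := M.factorization_cof_trivFib f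
    ⟨Z, i, p, fac, hi, ⟨hp, hp'⟩⟩

lemma hasLiftingProperty {A B X Y : C} {i : A ⟶ B} {p : X ⟶ Y} (hi : M.Cof i) (hp : M.Fib p)
    (h : M.W i ∨ M.W p) : HasLiftingProperty i p where
  sq_hasLift {f g} sq :=
    let ⟨l, fac_left, fac_right⟩ := M.lifting i p hi hp h f g sq.w
    ⟨⟨l, fac_left, fac_right⟩⟩

/-- The Mathlib model category with the weak equivalences, fibrations and cofibrations of `M`.
It connects `M` to Mathlib's homotopical algebra; being dependent on `M`, it is not an instance,
and it is reducible so that the classes of `M` unify with those of `ModelCategory`. -/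
@[reducible]
def toModelCategory [HasFiniteLimits C] [HasFiniteColimits C] : ModelCategory C where
  categoryWithFibrations := ⟨M.Fib⟩
  categoryWithCofibrations := ⟨M.Cof⟩
  categoryWithWeakEquivalences := ⟨M.W⟩
  cm2 := M.hasTwoOutOfThreeProperty_W
  cm3a := M.isStableUnderRetracts_W
  cm3b := M.isStableUnderRetracts_Fib
  cm3c := M.isStableUnderRetracts_Cof
  cm4a _ _ hi hi' hp := M.hasLiftingProperty hi.mem hp.mem (.inl hi'.mem)
  cm4b _ _ hi hp hp' := M.hasLiftingProperty hi.mem hp.mem (.inr hp'.mem)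
  cm5a := M.hasFactorization_trivCof_fib
  cm5b := M.hasFactorization_cof_trivFib

lemma homotopic_iff_exists_isVeryGood [HasFiniteLimits C] [HasColimits C] {X Y : C} {f g : X ⟶ Y} :
    letI := M.toModelCategory
    M.Homotopic f g ↔ ∃ P : Cylinder X, P.IsVeryGood ∧ Nonempty (P.LeftHomotopy f g) := by
  let _ := M.toModelCategory
  constructor
  · rintro ⟨I, i₀, i₁, π, h, fib_π, w_π, i₀_π, i₁_π, cof_i, h₀, h₁⟩
    let P : Cylinder X := { I, i₀, i₁, π, i₀_π, i₁_π, weakEquivalence_π := ⟨w_π⟩ }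
    exact ⟨P, { cofibration_i := ⟨cof_i⟩, fibration_π := ⟨fib_π⟩ }, ⟨{ h, h₀, h₁ }⟩⟩
  · rintro ⟨P, hP, ⟨H⟩⟩
    exact ⟨P.I, P.i₀, P.i₁, P.π, H.h, hP.fibration_π.mem, P.weakEquivalence_π.mem,
      P.i₀_π, P.i₁_π, hP.cofibration_i.mem, H.h₀, H.h₁⟩

instance isLocalization_Q [HasFiniteLimits C] [HasFiniteColimits C] :
    letI := M.toModelCategory
    M.W.Q.IsLocalization (weakEquivalences C) :=
  inferInstanceAs (M.W.Q.IsLocalization M.W)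

end ModelStructure

section ModelCategory

open HomotopicalAlgebra

lemma leftHomotopyRel_iff_exists_isVeryGood {C : Type u} [Category.{v} C] [ModelCategory C]
    {X Y : C} [IsFibrant Y] {f g : X ⟶ Y} :
    LeftHomotopyRel f g ↔ ∃ P : Cylinder X, P.IsVeryGood ∧ Nonempty (P.LeftHomotopy f g) :=
  ⟨fun h ↦ h.exists_very_good_cylinder, fun ⟨P, _, h⟩ ↦ ⟨P, h⟩⟩

theorem statement2_general {C : Type u} [Category.{v} C] [ModelCategory C]
    {H : Type u'} [Category.{v'} H] (L : C ⥤ H) [L.IsLocalization (weakEquivalences C)]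
    (X Y : C) [IsCofibrant X] [IsFibrant Y] :
    Function.Surjective (fun f : X ⟶ Y ↦ L.map f) ∧
    ∀ f g : X ⟶ Y, L.map f = L.map g ↔
      ∃ P : Cylinder X, P.IsVeryGood ∧ Nonempty (P.LeftHomotopy f g) :=
  ⟨map_surjective_of_isLocalization L X Y, fun _ _ ↦
    (LeftHomotopyRel.iff_map_eq L X Y).symm.trans leftHomotopyRel_iff_exists_isVeryGood⟩

end ModelCategory

/-- Let `C` be a model category, `X` a cofibrant object and `Y` a fibrant
object of `C`. Then the localization functor `l : C ⥤ Ho(C)` induces a bijection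
`Hom_C(X, Y)/∼ ≃ Hom_{Ho(C)}(l(X), l(Y))`; equivalently, the map
`f ↦ l(f)` is surjective onto `Hom_{Ho(C)}(l(X), l(Y))` and two morphisms have the same
image if and only if they are homotopic. -/
theorem statement2 {C : Type u} [Category.{v} C] [HasLimits C] [HasColimits C]
    (M : ModelStructure C) (X Y : C) (hX : M.Cofibrant X) (hY : M.Fibrant Y) :
    Function.Surjective (fun f : X ⟶ Y => M.W.Q.map f) ∧
    ∀ f g : X ⟶ Y, M.W.Q.map f = M.W.Q.map g ↔ M.Homotopic f g := by
  let _ := M.toModelCategory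
  have : HomotopicalAlgebra.IsCofibrant X := ⟨hX⟩
  have : HomotopicalAlgebra.IsFibrant Y := ⟨hY⟩
  simpa only [M.homotopic_iff_exists_isVeryGood] using statement2_general M.W.Q X Y
end

section
/- Let A be a commutative ring and f₁, …, f_r ∈ A a regular sequence generating the ideal I = (f₁, …, f_r). Then for every n ≥ 0 there is an isomorphism of A/I-modules Tor_n^A(A/I, A/I) ≅ ⋀ⁿ_{A/I}(I/I²), the n-th exterior power over A/I of the conormal module I/I². In particular Tor_n^A(A/I, A/I) = 0 for n > r. -/
open CategoryTheory

universe u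

/-!
The mapping cone of multiplication by `f` on a free resolution of `M` is a free resolution of
`M / fM` as soon as `f` is regular on `M`, and its differentials vanish modulo `I` if those of the
original resolution do and `f ∈ I`. Starting from `A` itself, a regular sequence of length `r`
in `I` thus gives a free resolution of `A / I` (the Koszul complex) with `r.choose n` generators
in degree `n` and with all differentials zero after tensoring with `A / I`. Hence
`Tor_n (A / I, A / I)` is free of rank `r.choose n` over `A / I`.

On the other side, every relation `∑ fᵢ aᵢ = 0` has coefficients in `I`, so the classes of the
`fᵢ` form a basis of `I / I²`, whose `n`-th exterior power is then free of rank `r.choose n` too.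
-/

section LeftDerived

variable {C : Type*} [Category* C] [Abelian C]

/-- The projective resolution of `Z` given by a complex of projectives that is exact in positive
degrees, together with an augmentation `ε` presenting `Z` as the cokernel of the last
differential. -/
noncomputable def projectiveResolutionOfExact {Z : C} (K : ChainComplex C ℕ)
    [∀ n, Projective (K.X n)] (ε : K.X 0 ⟶ Z) (epi : Epi ε) (w : K.d 1 0 ≫ ε = 0)
    (exact_zero : (ShortComplex.mk _ _ w).Exact) (exact_succ : ∀ n, K.ExactAt (n + 1)) :
    ProjectiveResolution Z where
  complex := K
  π := (ChainComplex.toSingle₀Equiv _ _).symm ⟨ε, w⟩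
  quasiIso := ⟨fun n => by
    cases n with
    | zero =>
      have g_eq_zero : (K.sc' 1 0 0).g = 0 := K.shape 0 0 (by simp)
      rw [ChainComplex.quasiIsoAt₀_iff, ShortComplex.quasiIso_iff_of_zeros' _ g_eq_zero rfl rfl]
      have f_zero : ((ChainComplex.toSingle₀Equiv K Z).symm ⟨ε, w⟩).f 0 = ε := by simp
      refine (ShortComplex.exact_and_epi_g_iff_of_iso ?_).2 ⟨exact_zero, epi⟩
      refine ShortComplex.isoMk (Iso.refl _) (Iso.refl _) (Iso.refl _) ?_ ?_
      · exact (Category.id_comp _).trans (Category.comp_id _).symm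
      · exact (Category.id_comp _).trans (f_zero.symm.trans (Category.comp_id _).symm)
    | succ n =>
      rw [quasiIsoAt_iff_exactAt' (hL := ChainComplex.exactAt_succ_single_obj ..)]
      exact exact_succ n⟩

/-- If an additive functor `F` kills the differentials of a projective resolution of `Z`, then its
left derived functors at `Z` are the values of `F` on the terms of the resolution. -/
noncomputable def leftDerivedObjIsoOfMapDEqZero {D : Type*} [Category* D] [Abelian D]
    [HasProjectiveResolutions C] (F : C ⥤ D) [F.Additive] {Z : C} (P : ProjectiveResolution Z)
    (map_d : ∀ n, F.map (P.complex.d (n + 1) n) = 0) (n : ℕ) :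
    (F.leftDerived n).obj Z ≅ F.obj (P.complex.X n) :=
  let FP := (F.mapHomologicalComplex (ComplexShape.down ℕ)).obj P.complex
  have d_eq_zero (i j : ℕ) : FP.d i j = 0 := by
    by_cases h : j + 1 = i
    · subst h
      exact map_d j
    · exact FP.shape i j h
  P.isoLeftDerivedObj F n ≪≫
    (ShortComplex.HomologyData.ofZeros (FP.sc n) (d_eq_zero _ _) (d_eq_zero _ _)).left.homologyIso

end LeftDerived

section Koszul

variable {A : Type u} [CommRing A]

lemma prodMk_mem_smul_top {M N : Type*} [AddCommGroup M] [Module A M] [AddCommGroup N]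
    [Module A N] {I : Ideal A} {x : M} {y : N} (hx : x ∈ I • (⊤ : Submodule A M))
    (hy : y ∈ I • (⊤ : Submodule A N)) : (x, y) ∈ I • (⊤ : Submodule A (M × N)) := by
  have inl_mem : (x, 0) ∈ I • (⊤ : Submodule A (M × N)) :=
    Submodule.smul_top_le_comap_smul_top I (LinearMap.inl A M N) hx
  have inr_mem : (0, y) ∈ I • (⊤ : Submodule A (M × N)) :=
    Submodule.smul_top_le_comap_smul_top I (LinearMap.inr A M N) hy
  simpa using add_mem inl_mem inr_mem

lemma lTensor_eq_zero_of_mem_smul_top {N P Q : Type*} [AddCommGroup N] [Module A N]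
    [AddCommGroup P] [Module A P] [AddCommGroup Q] [Module A Q] {I : Ideal A}
    (hN : Module.IsTorsionBySet A N I) {f : P →ₗ[A] Q}
    (hf : ∀ x, f x ∈ I • (⊤ : Submodule A Q)) : f.lTensor N = 0 := by
  have tmul_eq_zero (m : N) {z : Q} (hz : z ∈ I • (⊤ : Submodule A Q)) : m ⊗ₜ[A] z = 0 := by
    refine Submodule.smul_induction_on hz (fun a ha y _ => ?_) fun x y hx hy => ?_
    · rw [← TensorProduct.smul_tmul, @hN m ⟨a, ha⟩, TensorProduct.zero_tmul]
    · rw [TensorProduct.tmul_add, hx, hy, add_zero]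
  ext m x
  exact tmul_eq_zero m (hf x)

/-- A free resolution of the `A`-module `M` with chosen bases, having `rank n` generators in
degree `n`, and which is minimal with respect to the ideal `I` in the sense that its differentials
vanish modulo `I`. The differential `d n` leaves degree `n + 1`. -/
structure MinimalFreeResolution (I : Ideal A) (M : Type*) [AddCommGroup M] [Module A M]
    (rank : ℕ → ℕ) where
  X : ℕ → ModuleCat.{u} A
  basis (n : ℕ) : Module.Basis (Fin (rank n)) A (X n)
  d (n : ℕ) : X (n + 1) →ₗ[A] X n
  ε : X 0 →ₗ[A] M
  ε_surjective : Function.Surjective ε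
  exact_zero : Function.Exact (d 0) ε
  exact_succ (n : ℕ) : Function.Exact (d (n + 1)) (d n)
  d_mem (n : ℕ) (x : X (n + 1)) : d n x ∈ I • (⊤ : Submodule A (X n))

namespace MinimalFreeResolution

open scoped Pointwise

variable {I : Ideal A} {M M' : Type*} [AddCommGroup M] [Module A M] [AddCommGroup M'] [Module A M']
  {rank : ℕ → ℕ}

/-- The ring `A`, concentrated in degree `0`, as a resolution of itself. -/
noncomputable def self (I : Ideal A) : MinimalFreeResolution I A (Nat.choose 0) where
  X
    | 0 => ModuleCat.of A A
    | _ + 1 => ModuleCat.of A PUnit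
  basis
    | 0 => (Module.Basis.singleton (Fin 1) A :)
    | _ + 1 => (Module.Basis.empty _ : Module.Basis (Fin 0) A PUnit.{u + 1})
  d _ := 0
  ε := LinearMap.id
  ε_surjective := Function.surjective_id
  exact_zero _ := ⟨fun hx => ⟨0, hx.symm⟩, fun ⟨_, hx⟩ => hx.symm⟩
  exact_succ _ _ := ⟨fun _ => ⟨0, rfl⟩, fun _ => rfl⟩
  d_mem _ _ := zero_mem _

/-- Transport of a resolution along an isomorphism of the resolved module. -/
def congr (K : MinimalFreeResolution I M rank) (e : M ≃ₗ[A] M') :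
    MinimalFreeResolution I M' rank where
  __ := K
  ε := e.toLinearMap ∘ₗ K.ε
  ε_surjective := e.surjective.comp K.ε_surjective
  exact_zero x := (map_eq_zero_iff e e.injective).trans (K.exact_zero x)

section Cone

/-- The ranks of the mapping cone of an endomorphism of a complex with the given ranks. -/
def coneRank (rank : ℕ → ℕ) : ℕ → ℕ
  | 0 => rank 0
  | n + 1 => rank (n + 1) + rank n

lemma coneRank_choose (r : ℕ) : coneRank r.choose = (r + 1).choose := by
  funext n
  cases n with
  | zero => simp [coneRank]
  | succ n => rw [coneRank, Nat.choose_succ_succ, add_comm]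

variable (K : MinimalFreeResolution I M rank) (f : A)

/-- The terms of the mapping cone of multiplication by a scalar. -/
def coneX : ℕ → ModuleCat.{u} A
  | 0 => K.X 0
  | n + 1 => ModuleCat.of A (K.X (n + 1) × K.X n)

/-- The bases of the terms of the mapping cone. -/
noncomputable def coneBasis : ∀ n, Module.Basis (Fin (coneRank rank n)) A (K.coneX n)
  | 0 => K.basis 0
  | n + 1 => (((K.basis (n + 1)).prod (K.basis n)).reindex finSumFinEquiv :)

/-- The differential of the mapping cone of multiplication by `f`. -/
def coneD : ∀ n, K.coneX (n + 1) →ₗ[A] K.coneX n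
  | 0 => ((K.d 0).coprod (f • LinearMap.id) :)
  | n + 1 => (((K.d (n + 1)).coprod (f • LinearMap.id)).prod (-(K.d n ∘ₗ LinearMap.snd A _ _)) :)

lemma coneD_zero_apply (x : K.X 1) (y : K.X 0) :
    K.coneD f 0 ((x, y) : K.X 1 × K.X 0) = (K.d 0 x + f • y : K.X 0) :=
  rfl

lemma coneD_succ_apply (n : ℕ) (x : K.X (n + 2)) (y : K.X (n + 1)) :
    K.coneD f (n + 1) ((x, y) : K.X (n + 2) × K.X (n + 1)) =
      ((K.d (n + 1) x + f • y, -K.d n y) : K.X (n + 1) × K.X n) :=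
  rfl

lemma coneD_coneD (n : ℕ) (w : K.coneX (n + 2)) : K.coneD f n (K.coneD f (n + 1) w) = 0 := by
  obtain ⟨x, y⟩ := w
  have hx := (K.exact_succ n).apply_apply_eq_zero x
  rw [coneD_succ_apply]
  cases n with
  | zero => rw [coneD_zero_apply, map_add, hx, map_smul, smul_neg, zero_add, add_neg_cancel]; rfl
  | succ n =>
    have hy := (K.exact_succ n).apply_apply_eq_zero y
    rw [coneD_succ_apply, map_add, hx, map_smul, smul_neg, zero_add, add_neg_cancel, map_neg, hy,
      neg_zero, neg_zero]
    rfl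

lemma prodMk_mem_range_coneD {n : ℕ} {x : K.X (n + 1)} {y : K.X n} (hy : y ∈ Set.range (K.d n))
    (hxy : K.d n x + f • y = 0) :
    ((x, y) : K.X (n + 1) × K.X n) ∈ Set.range (K.coneD f (n + 1)) := by
  obtain ⟨y', rfl⟩ := hy
  obtain ⟨x', hx'⟩ := (K.exact_succ n (x + f • y')).1 (by rw [map_add, map_smul, hxy])
  refine ⟨((x', -y') : K.X (n + 2) × K.X (n + 1)), ?_⟩
  rw [coneD_succ_apply, hx', smul_neg, map_neg, neg_neg, add_neg_cancel_right]

variable {f}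

lemma coneD_exact_succ (hf : IsSMulRegular M f) (n : ℕ) :
    Function.Exact (K.coneD f (n + 1)) (K.coneD f n) := by
  refine fun w => ⟨fun hw => ?_, fun ⟨v, hv⟩ => hv ▸ K.coneD_coneD f n v⟩
  obtain ⟨x, y⟩ := w
  cases n with
  | zero =>
    replace hw : K.d 0 x + f • y = 0 := hw
    have hεy : f • K.ε y = 0 := by
      have := congrArg K.ε hw
      rwa [map_add, K.exact_zero.apply_apply_eq_zero, zero_add, map_smul, map_zero] at this
    exact K.prodMk_mem_range_coneD f ((K.exact_zero y).1 (hf.right_eq_zero_of_smul hεy)) hw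
  | succ n =>
    obtain ⟨hx, hy⟩ := Prod.mk.inj hw
    exact K.prodMk_mem_range_coneD f ((K.exact_succ n y).1 (neg_eq_zero.1 hy)) hx

lemma mem_range_coneD_zero_iff {x : K.X 0} :
    x ∈ Set.range (K.coneD f 0) ↔ ∃ y : K.X 0, f • K.ε y = K.ε x := by
  constructor
  · rintro ⟨⟨x', y⟩, rfl⟩
    refine ⟨y, ?_⟩
    rw [coneD_zero_apply, map_add, map_smul, K.exact_zero.apply_apply_eq_zero, zero_add]
  · rintro ⟨y, hy⟩
    obtain ⟨x', hx'⟩ := (K.exact_zero (x - f • y)).1 (by rw [map_sub, map_smul, hy, sub_self])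
    refine ⟨((x', y) : K.X 1 × K.X 0), ?_⟩
    rw [coneD_zero_apply, hx', sub_add_cancel]

lemma coneD_exact_zero :
    Function.Exact (K.coneD f 0) ((f • (⊤ : Submodule A M)).mkQ ∘ₗ K.ε) := by
  intro (x : K.X 0)
  have mem_iff : K.ε x ∈ f • (⊤ : Submodule A M) ↔ ∃ y, f • K.ε y = K.ε x := by
    simp [Submodule.mem_smul_pointwise_iff_exists, K.ε_surjective.exists]
  exact (Submodule.Quotient.mk_eq_zero _).trans (mem_iff.trans K.mem_range_coneD_zero_iff.symm)

lemma coneD_mem (hf : f ∈ I) (n : ℕ) (w : K.coneX (n + 1)) :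
    K.coneD f n w ∈ I • (⊤ : Submodule A (K.coneX n)) := by
  obtain ⟨x, y⟩ := w
  have fst_mem : K.d n x + f • y ∈ I • (⊤ : Submodule A (K.X n)) :=
    add_mem (K.d_mem n x) (Submodule.smul_mem_smul hf trivial)
  cases n with
  | zero => exact fst_mem
  | succ n => exact prodMk_mem_smul_top fst_mem (neg_mem (K.d_mem n y))

/-- The mapping cone of multiplication by `f` on a resolution of `M`, as a resolution of
`M / fM`. -/
noncomputable def cone (hf : IsSMulRegular M f) (hfI : f ∈ I) :
    MinimalFreeResolution I (QuotSMulTop f M) (coneRank rank) where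
  X := K.coneX
  basis := K.coneBasis
  d := K.coneD f
  ε := (f • (⊤ : Submodule A M)).mkQ ∘ₗ K.ε
  ε_surjective := (Submodule.mkQ_surjective _).comp K.ε_surjective
  exact_zero := K.coneD_exact_zero
  exact_succ := K.coneD_exact_succ hf
  d_mem := K.coneD_mem hfI

end Cone

lemma nonempty_of_isWeaklyRegular {rs : List A} (hrs : RingTheory.Sequence.IsWeaklyRegular M rs)
    (hI : Ideal.ofList rs ≤ I) {r : ℕ} (K : MinimalFreeResolution I M r.choose) :
    Nonempty (MinimalFreeResolution I (M ⧸ (Ideal.ofList rs • ⊤ : Submodule A M))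
      (r + rs.length).choose) := by
  induction hrs using RingTheory.Sequence.IsWeaklyRegular.recIterModByRegular generalizing r with
  | nil M => exact ⟨K.congr (Submodule.quotEquivOfEqBot _ (by simp)).symm⟩
  | cons f rs hf _ ih =>
    rw [Ideal.ofList_cons, sup_le_iff, Ideal.span_singleton_le_iff_mem] at hI
    have K' := K.cone hf hI.1
    rw [coneRank_choose] at K'
    obtain ⟨L⟩ := ih hI.2 K'
    rw [List.length_cons, add_comm rs.length, ← add_assoc]
    exact ⟨L.congr (Submodule.quotOfListConsSMulTopEquivQuotSMulTopInner _ f rs).symm⟩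

section Tor

variable {M N : Type u} [AddCommGroup M] [Module A M] [AddCommGroup N] [Module A N]
  (K : MinimalFreeResolution I M rank)

/-- The chain complex underlying a resolution. -/
noncomputable def complex : ChainComplex (ModuleCat.{u} A) ℕ :=
  ChainComplex.of K.X (fun n => ModuleCat.ofHom (K.d n)) fun n =>
    ModuleCat.hom_ext (K.exact_succ n).linearMap_comp_eq_zero

lemma complex_d (n : ℕ) : K.complex.d (n + 1) n = ModuleCat.ofHom (K.d n) :=
  ChainComplex.of_d K.X (fun n => ModuleCat.ofHom (K.d n)) n

lemma complex_d_ofHom_ε : K.complex.d 1 0 ≫ ModuleCat.ofHom K.ε = 0 := by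
  rw [complex_d]
  exact ModuleCat.hom_ext K.exact_zero.linearMap_comp_eq_zero

lemma complex_exact_zero : (ShortComplex.mk _ _ K.complex_d_ofHom_ε).Exact := by
  rw [ShortComplex.moduleCat_exact_iff]
  intro x hx
  obtain ⟨y, hy⟩ := (K.exact_zero x).1 hx
  refine ⟨y, ?_⟩
  change K.complex.d 1 0 y = x
  rw [complex_d]
  exact hy

lemma complex_exactAt_succ (n : ℕ) : K.complex.ExactAt (n + 1) := by
  rw [HomologicalComplex.exactAt_iff' _ (n + 2) (n + 1) n (by simp) (by simp),
    ShortComplex.moduleCat_exact_iff]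
  intro x hx
  replace hx : K.complex.d (n + 1) n x = 0 := hx
  rw [complex_d] at hx
  obtain ⟨y, hy⟩ := (K.exact_succ n x).1 hx
  refine ⟨y, ?_⟩
  change K.complex.d (n + 2) (n + 1) y = x
  rw [complex_d]
  exact hy

instance (n : ℕ) : Projective (K.complex.X n) :=
  (IsProjective.iff_projective (K.X n)).1 (.of_basis (K.basis n))

/-- A minimal free resolution as a projective resolution in the category of modules. -/
noncomputable def projectiveResolution : ProjectiveResolution (ModuleCat.of A M) :=
  projectiveResolutionOfExact K.complex (ModuleCat.ofHom K.ε)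
    ((ModuleCat.epi_iff_surjective _).2 K.ε_surjective)
    K.complex_d_ofHom_ε K.complex_exact_zero K.complex_exactAt_succ

lemma tensoringLeft_map_complex_d (hN : Module.IsTorsionBySet A N I) (n : ℕ) :
    ((MonoidalCategory.tensoringLeft (ModuleCat.{u} A)).obj (ModuleCat.of A N)).map
      (K.complex.d (n + 1) n) = 0 := by
  rw [complex_d]
  exact ModuleCat.hom_ext (lTensor_eq_zero_of_mem_smul_top hN (K.d_mem n))

/-- The computation of `Tor` by a minimal free resolution, whose differentials vanish after
tensoring with a module killed by `I`. -/
noncomputable def torEquiv (hN : Module.IsTorsionBySet A N I) (n : ℕ) :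
    ((Tor (ModuleCat.{u} A) n).obj (ModuleCat.of A N)).obj (ModuleCat.of A M) ≃ₗ[A]
      (Fin (rank n) →₀ N) :=
  (leftDerivedObjIsoOfMapDEqZero ((MonoidalCategory.tensoringLeft _).obj (ModuleCat.of A N))
    K.projectiveResolution (K.tensoringLeft_map_complex_d hN) n).toLinearEquiv ≪≫ₗ
    (TensorProduct.equivFinsuppOfBasisRight (K.basis n) : TensorProduct A N (K.X n) ≃ₗ[A] _)

end Tor

end MinimalFreeResolution

section Conormal

open RingTheory.Sequence

lemma mem_span_range_smul_iff_exists_sum {ι M : Type*} [Fintype ι] [AddCommGroup M] [Module A M]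
    {f : ι → A} {N : Submodule A M} {x : M} :
    x ∈ Ideal.span (Set.range f) • N ↔ ∃ m : ι → M, (∀ i, m i ∈ N) ∧ ∑ i, f i • m i = x := by
  constructor
  · intro hx
    refine Submodule.smul_induction_on hx (fun a ha y hy => ?_) ?_
    · obtain ⟨c, rfl⟩ := Ideal.mem_span_range_iff_exists_fun.1 ha
      refine ⟨fun i => c i • y, fun i => N.smul_mem _ hy, ?_⟩
      simp only [Finset.sum_smul, smul_smul, mul_comm]
    · rintro _ _ ⟨m, hm, rfl⟩ ⟨m', hm', rfl⟩
      exact ⟨m + m', fun i => add_mem (hm i) (hm' i), by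
        simp only [Pi.add_apply, smul_add, Finset.sum_add_distrib]⟩
  · rintro ⟨m, hm, rfl⟩
    exact sum_mem fun i _ => Submodule.smul_mem_smul (Ideal.subset_span ⟨i, rfl⟩) (hm i)

lemma ofList_ofFn {r : ℕ} (f : Fin r → A) :
    Ideal.ofList (List.ofFn f) = Ideal.span (Set.range f) := by
  simp only [Ideal.ofList, List.mem_ofFn, Set.range]

lemma isWeaklyRegular_ofFn_succ_iff {M : Type*} [AddCommGroup M] [Module A M] {r : ℕ}
    {f : Fin (r + 1) → A} :
    IsWeaklyRegular M (List.ofFn f) ↔ IsWeaklyRegular M (List.ofFn (Fin.init f)) ∧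
      IsSMulRegular (M ⧸ (Ideal.span (Set.range (Fin.init f)) • ⊤ : Submodule A M))
        (f (Fin.last r)) := by
  rw [List.ofFn_succ', List.concat_eq_append, isWeaklyRegular_append_iff,
    isWeaklyRegular_singleton_iff, ofList_ofFn]
  rfl

lemma mem_smul_top_of_sum_smul_eq_zero {M : Type*} [AddCommGroup M] [Module A M] {r : ℕ}
    {f : Fin r → A} (hf : IsWeaklyRegular M (List.ofFn f)) {m : Fin r → M}
    (hm : ∑ i, f i • m i = 0) (i : Fin r) :
    m i ∈ Ideal.span (Set.range f) • (⊤ : Submodule A M) := by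
  induction r with
  | zero => exact i.elim0
  | succ r ih =>
    obtain ⟨hinit, hlast⟩ := isWeaklyRegular_ofFn_succ_iff.1 hf
    have init_le : Ideal.span (Set.range (Fin.init f)) • (⊤ : Submodule A M) ≤
        Ideal.span (Set.range f) • ⊤ :=
      Submodule.smul_mono_left (Ideal.span_mono (Set.range_comp_subset_range _ f))
    rw [Fin.sum_univ_castSucc] at hm
    have last_mem : m (Fin.last r) ∈ Ideal.span (Set.range (Fin.init f)) • (⊤ : Submodule A M) := by
      rw [← Submodule.Quotient.mk_eq_zero]
      apply hlast.right_eq_zero_of_smul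
      rw [← Submodule.Quotient.mk_smul, Submodule.Quotient.mk_eq_zero,
        eq_neg_of_add_eq_zero_right hm, neg_mem_iff]
      exact mem_span_range_smul_iff_exists_sum.2 ⟨_, fun _ => trivial, rfl⟩
    obtain ⟨n, -, hn⟩ := mem_span_range_smul_iff_exists_sum.1 last_mem
    have sum_eq_zero : ∑ j, Fin.init f j • (Fin.init m j + f (Fin.last r) • n j) = 0 := by
      rw [← hm, ← hn]
      simp only [smul_add, Finset.sum_add_distrib, Finset.smul_sum, smul_comm (f (Fin.last r))]
      rfl
    cases i using Fin.lastCases with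
    | last => exact init_le last_mem
    | cast j =>
      have h := init_le (ih hinit sum_eq_zero j)
      refine (add_mem_cancel_right (Submodule.smul_mem_smul ?_ Submodule.mem_top)).1 h
      exact Ideal.subset_span ⟨_, rfl⟩

variable {r : ℕ} {f : Fin r → A} {I : Ideal A}

lemma linearIndependent_toCotangent (hf : IsWeaklyRegular A (List.ofFn f))
    (hI : I = Ideal.span (Set.range f)) (hfI : ∀ i, f i ∈ I) :
    LinearIndependent (A ⧸ I) fun i => I.toCotangent ⟨f i, hfI i⟩ := by
  rw [Fintype.linearIndependent_iff]
  intro g hg i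
  obtain ⟨a, rfl⟩ := Ideal.Quotient.mk_surjective.comp_left g
  have sum_mem_sq : ∑ i, f i • a i ∈ I ^ 2 := by
    have : I.toCotangent (∑ i, a i • ⟨f i, hfI i⟩) = 0 := by
      rw [map_sum, ← hg]
      simp only [map_smul]
      rfl
    simpa [mul_comm] using (I.toCotangent_eq_zero _).1 this
  obtain ⟨c, hc, hsum⟩ : ∃ c : Fin r → A, (∀ i, c i ∈ I) ∧ ∑ i, f i • c i = ∑ i, f i • a i := by
    rw [← mem_span_range_smul_iff_exists_sum, ← hI, Ideal.smul_eq_mul, ← sq]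
    exact sum_mem_sq
  have relation : ∑ i, f i • (a i - c i) = 0 := by
    simp only [smul_sub, Finset.sum_sub_distrib, hsum, sub_self]
  have sub_mem : a i - c i ∈ I := by
    simpa [← hI] using mem_smul_top_of_sum_smul_eq_zero hf relation i
  exact Ideal.Quotient.eq_zero_iff_mem.2 ((Submodule.sub_mem_iff_left I (hc i)).1 sub_mem)

lemma span_range_toCotangent_eq_top (hI : I = Ideal.span (Set.range f)) (hfI : ∀ i, f i ∈ I) :
    Submodule.span (A ⧸ I) (Set.range fun i => I.toCotangent ⟨f i, hfI i⟩) = ⊤ := by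
  rw [eq_top_iff]
  rintro x -
  obtain ⟨⟨x, hx⟩, rfl⟩ := I.toCotangent_surjective x
  obtain ⟨a, rfl⟩ := Ideal.mem_span_range_iff_exists_fun.1 (hI ▸ hx)
  have : I.toCotangent ⟨∑ i, a i * f i, hx⟩ =
      ∑ i, Ideal.Quotient.mk I (a i) • I.toCotangent ⟨f i, hfI i⟩ := by
    trans I.toCotangent (∑ i, a i • ⟨f i, hfI i⟩)
    · congr 1
      ext
      simp
    · simp only [map_sum, map_smul]
      rfl
  rw [this]
  exact sum_mem fun i _ => Submodule.smul_mem _ _ (Submodule.subset_span ⟨i, rfl⟩)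

/-- The basis of the conormal module `I / I²` formed by the classes of the elements of a weakly
regular sequence generating `I`. -/
noncomputable def conormalBasis (hf : IsWeaklyRegular A (List.ofFn f))
    (hI : I = Ideal.span (Set.range f)) : Module.Basis (Fin r) (A ⧸ I) I.Cotangent :=
  have hfI i : f i ∈ I := hI ▸ Ideal.subset_span ⟨i, rfl⟩
  .mk (linearIndependent_toCotangent hf hI hfI) (span_range_toCotangent_eq_top hI hfI).ge

end Conormal

end Koszul

/-- The basis of the `n`-th exterior power of a free module of rank `r` numbered by
`Fin (r.choose n)`. -/
noncomputable def exteriorPowerFinBasis {S V : Type*} [CommRing S] [AddCommGroup V] [Module S V]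
    {r : ℕ} (b : Module.Basis (Fin r) S V) (n : ℕ) :
    Module.Basis (Fin (r.choose n)) S (⋀[S]^n V) :=
  (b.exteriorPower n).reindex <|
    Finite.equivFinOfCardEq (by rw [Set.powersetCard.card, Nat.card_fin])

/-- An `S`-linear equivalence regarded as an `R`-linear one out of the type synonym
`RestrictScalars R S V`. -/
def restrictScalarsEquiv (R : Type*) {S V W : Type*} [CommRing R] [CommRing S] [Algebra R S]
    [AddCommGroup V] [Module S V] [AddCommGroup W] [Module S W] [Module R W] [IsScalarTower R S W]
    (e : V ≃ₗ[S] W) : RestrictScalars R S V ≃ₗ[R] W where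
  __ := (RestrictScalars.addEquiv R S V).trans e.toAddEquiv
  map_smul' a x :=
    (e.map_smul (algebraMap R S a) (RestrictScalars.addEquiv R S V x)).trans
      (algebraMap_smul S a _)

/-- Let `A` be a commutative ring and `f₁, …, f_r ∈ A` a regular sequence
generating the ideal `I = (f₁, …, f_r)`. Then for every `n ≥ 0` there is an isomorphism of
`A/I`-modules `Tor_n^A(A/I, A/I) ≅ ⋀ⁿ_{A/I}(I/I²)` (stated here as an `A`-linear
equivalence onto the `n`-th exterior power of the conormal module `I/I²` over `A/I`, viewed
as an `A`-module by restriction of scalars; such an equivalence is automatically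
`A/I`-linear since `A` acts through `A/I` on both sides). In particular
`Tor_n^A(A/I, A/I) = 0` for `n > r`. -/
theorem statement8 (A : Type u) [CommRing A] (rs : List A)
    (hreg : RingTheory.Sequence.IsRegular A rs) (I : Ideal A) (hI : I = Ideal.ofList rs) :
    (∀ n : ℕ,
      Nonempty (((((Tor (ModuleCat.{u} A) n).obj (ModuleCat.of A (A ⧸ I))).obj
          (ModuleCat.of A (A ⧸ I))) : Type u) ≃ₗ[A]
        RestrictScalars A (A ⧸ I) (⋀[A ⧸ I]^n I.Cotangent))) ∧
    (∀ n : ℕ, rs.length < n →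
      Subsingleton ((((Tor (ModuleCat.{u} A) n).obj (ModuleCat.of A (A ⧸ I))).obj
        (ModuleCat.of A (A ⧸ I))) : Type u)) := by
  obtain ⟨r, f, rfl⟩ : ∃ r, ∃ f : Fin r → A, rs = List.ofFn f := ⟨_, _, (List.ofFn_get rs).symm⟩
  have hreg := hreg.toIsWeaklyRegular
  obtain ⟨K⟩ : Nonempty (MinimalFreeResolution I (A ⧸ I) r.choose) := by
    obtain ⟨K⟩ := (MinimalFreeResolution.self I).nonempty_of_isWeaklyRegular hreg hI.ge
    rw [zero_add, List.length_ofFn] at K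
    exact ⟨K.congr (Submodule.quotEquivOfEq _ _ (by simp [hI]))⟩
  have torsion : Module.IsTorsionBySet A (A ⧸ I) I :=
    (Module.isTorsionBySet_quotient_iff I I).2 fun x _ ha => I.mul_mem_right x ha
  have torEquiv n := K.torEquiv torsion n
  have extBasis n := exteriorPowerFinBasis (conormalBasis hreg (hI.trans (ofList_ofFn f))) n
  refine ⟨fun n => ⟨(torEquiv n).trans (restrictScalarsEquiv A (extBasis n).repr).symm⟩,
    fun n hn => ?_⟩
  rw [List.length_ofFn] at hn
  have : IsEmpty (Fin (r.choose n)) := by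
    rw [Nat.choose_eq_zero_of_lt hn]
    exact Fin.isEmpty
  exact (torEquiv n).toEquiv.subsingleton
end

section
/- Let k be a commutative ring, A a formally smooth commutative k-algebra, and k[ε] = k[x]/(x²) the ring of dual numbers over k. Let B be a commutative k[ε]-algebra which is flat as a k[ε]-module and which is equipped with an isomorphism of k-algebras B/εB ≅ A. Then there exists an isomorphism of k[ε]-algebras B ≅ A ⊗_k k[ε] compatible with the given identification modulo ε. In other words, a formally smooth affine algebra is rigid: it admits no nontrivial first-order deformations. -/
open scoped TensorProduct

universe u

/-- The `k`-algebra map `A ⊗[k] k[ε] → A` sending `ε` to `0` (reduction modulo `ε` of the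
trivial first-order deformation of `A`). -/
noncomputable def reduceEps (k : Type u) [CommRing k] (A : Type u) [CommRing A]
    [Algebra k A] : A ⊗[k] DualNumber k →ₐ[k] A :=
  (Algebra.TensorProduct.rid k k A).toAlgHom.comp
    (Algebra.TensorProduct.map (AlgHom.id k A) (TrivSqZeroExt.fstHom k k k))

attribute [local instance] Algebra.TensorProduct.rightAlgebra

/-!
A nilpotent ideal satisfies Nakayama's lemma without finiteness conditions, so a linear map into a
flat module is bijective as soon as it is bijective modulo a nilpotent ideal. Formal smoothness
lifts the identification `A ⊗[k] k[ε] ⧸ (ε) ≅ A ≅ B ⧸ (ε)` to a map `A ⊗[k] k[ε] → B` of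
`k[ε]`-algebras, which is therefore an isomorphism. Only two features of `k[ε]` matter: the
augmentation `k[ε] → k` and the nilpotence of its kernel.
-/

section Nilpotent

variable {R M : Type*}

theorem le_pow_smul_of_le_smul [CommSemiring R] [AddCommMonoid M] [Module R M] {I : Ideal R}
    {N : Submodule R M} (h : N ≤ I • N) (n : ℕ) : N ≤ I ^ n • N := by
  induction n with
  | zero => simp
  | succ n ih =>
    calc N ≤ I • N := h
      _ ≤ I • I ^ n • N := smul_mono_right I ih
      _ = I ^ (n + 1) • N := by rw [pow_succ', mul_smul]

theorem eq_bot_of_le_smul_of_isNilpotent [CommSemiring R] [AddCommMonoid M] [Module R M]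
    {I : Ideal R} (hI : IsNilpotent I) {N : Submodule R M} (h : N ≤ I • N) : N = ⊥ := by
  obtain ⟨n, hn⟩ := hI
  simpa [hn] using le_pow_smul_of_le_smul h n

theorem eq_top_of_sup_smul_top_eq_top_of_isNilpotent [CommRing R] [AddCommGroup M] [Module R M]
    {I : Ideal R} (hI : IsNilpotent I) {N : Submodule R M} (h : N ⊔ I • ⊤ = ⊤) : N = ⊤ := by
  have quotient_top_le : (⊤ : Submodule R (M ⧸ N)) ≤ I • ⊤ := by
    have := congrArg (Submodule.map N.mkQ) h
    simpa [Submodule.map_sup, Submodule.map_smul''] using this.ge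
  have range_eq_bot : N.mkQ.range = ⊥ := by
    rw [N.range_mkQ, eq_bot_of_le_smul_of_isNilpotent hI quotient_top_le]
  rw [← N.ker_mkQ, LinearMap.range_eq_bot.mp range_eq_bot, LinearMap.ker_zero]

theorem bijective_of_isNilpotent_of_flat [CommRing R] [AddCommGroup M] [Module R M]
    {N : Type*} [AddCommGroup N] [Module R N] [Module.Flat R N] {I : Ideal R}
    (hI : IsNilpotent I) {f : M →ₗ[R] N} (hker : f.ker ≤ I • ⊤) (hrange : f.range ⊔ I • ⊤ = ⊤) :
    Function.Bijective f := by
  have hsurj : Function.Surjective f :=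
    LinearMap.range_eq_top.mp (eq_top_of_sup_smul_top_eq_top_of_isNilpotent hI hrange)
  have ker_le : f.ker ≤ I • f.ker :=
    (le_inf le_rfl hker).trans (LinearMap.ker_inf_smul_top_eq_smul_of_flat I f hsurj).le
  exact ⟨LinearMap.ker_eq_bot.mp (eq_bot_of_le_smul_of_isNilpotent hI ker_le), hsurj⟩

end Nilpotent

section Lifting

variable {R P B C : Type*} [CommRing R] [CommRing P] [CommRing B] [CommRing C]
  [Algebra R P] [Algebra R B] [Algebra R C] {J : Ideal R}

theorem bijective_of_comp_eq_of_isNilpotent_of_flat [Module.Flat R B] (hJ : IsNilpotent J)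
    {p : P →ₐ[R] C} {q : B →ₐ[R] C} {ψ : P →ₐ[R] B} (hψ : q.comp ψ = p)
    (hp : Function.Surjective p)
    (hpker : RingHom.ker p ≤ J.map (algebraMap R P))
    (hqker : RingHom.ker q ≤ J.map (algebraMap R B)) : Function.Bijective ψ := by
  have hψ_apply (x : P) : q (ψ x) = p x := DFunLike.congr_fun hψ x
  refine bijective_of_isNilpotent_of_flat hJ (f := ψ.toLinearMap) (fun x hx => ?_)
    (eq_top_iff.mpr fun b _ => ?_)
  · have : p x = 0 := by rw [← hψ_apply, show ψ x = 0 from hx, map_zero]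
    simpa using hpker this
  · obtain ⟨x, hx⟩ := hp (q b)
    have hmem : b - ψ x ∈ RingHom.ker q := by
      rw [RingHom.mem_ker, map_sub, hψ_apply, hx, sub_self]
    rw [← add_sub_cancel (ψ x) b]
    exact Submodule.add_mem_sup ⟨x, rfl⟩ (by simpa using hqker hmem)

theorem exists_algEquiv_of_formallySmooth_of_flat [Algebra.FormallySmooth R P] [Module.Flat R B]
    (hJ : IsNilpotent J) {p : P →ₐ[R] C} {q : B →ₐ[R] C}
    (hp : Function.Surjective p) (hq : Function.Surjective q)
    (hpker : RingHom.ker p ≤ J.map (algebraMap R P))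
    (hqker : RingHom.ker q ≤ J.map (algebraMap R B)) :
    ∃ φ : P ≃ₐ[R] B, ∀ x, q (φ x) = p x := by
  have hnil : IsNilpotent (RingHom.ker q) := by
    obtain ⟨n, hn⟩ := hJ
    refine ⟨n, eq_bot_iff.mpr ((Ideal.pow_right_mono hqker n).trans ?_)⟩
    rw [← Ideal.map_pow, hn, Ideal.zero_eq_bot, Ideal.map_bot]
  let ψ : P →ₐ[R] B := Algebra.FormallySmooth.liftOfSurjective p q hq hnil
  have hψ : q.comp ψ = p := Algebra.FormallySmooth.comp_liftOfSurjective p q hq hnil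
  exact ⟨.ofBijective ψ (bijective_of_comp_eq_of_isNilpotent_of_flat hJ hψ hp hpker hqker),
    fun x => DFunLike.congr_fun hψ x⟩

end Lifting

section Augmented

variable {k R A : Type*} [CommRing k] [CommRing R] [Algebra k R] [CommRing A] [Algebra k A]

/-- The reduction `A ⊗[k] R → A` of the trivial deformation of `A` over an augmented `k`-algebra
`R` along its augmentation `π`, generalizing `reduceEps`. It is defined as a product map because
`Algebra.TensorProduct.rid` clashes with the `k`-algebra structure that
`Algebra.TensorProduct.rightAlgebra` puts on `A ⊗[k] k`. -/
noncomputable def reduceAlong (A : Type*) [CommRing A] [Algebra k A] (π : R →ₐ[k] k) :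
    A ⊗[k] R →ₐ[k] A :=
  Algebra.TensorProduct.productMap (AlgHom.id k A) ((Algebra.ofId k A).comp π)

theorem reduceAlong_tmul (π : R →ₐ[k] k) (a : A) (r : R) :
    reduceAlong A π (a ⊗ₜ r) = π r • a := by
  simp [reduceAlong, Algebra.ofId_apply, Algebra.smul_def, mul_comm]

theorem reduceAlong_surjective (π : R →ₐ[k] k) : Function.Surjective (reduceAlong A π) :=
  fun a => ⟨a ⊗ₜ 1, by simp [reduceAlong_tmul]⟩

theorem sub_algebraMap_mem_ker (π : R →ₐ[k] k) (r : R) :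
    r - algebraMap k R (π r) ∈ RingHom.ker π := by
  simp [RingHom.mem_ker]

theorem sub_reduceAlong_tmul_one_mem (π : R →ₐ[k] k) (x : A ⊗[k] R) :
    x - reduceAlong A π x ⊗ₜ 1 ∈ (RingHom.ker π).map (algebraMap R (A ⊗[k] R)) := by
  induction x using TensorProduct.induction_on with
  | zero => simp
  | tmul a r =>
    have factor : a ⊗ₜ[k] r - reduceAlong A π (a ⊗ₜ r) ⊗ₜ 1 =
        a ⊗ₜ 1 * algebraMap R (A ⊗[k] R) (r - algebraMap k R (π r)) := by
      rw [reduceAlong_tmul, TensorProduct.smul_tmul, ← TensorProduct.tmul_sub,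
        Algebra.TensorProduct.algebraMap_eq_includeRight, Algebra.algebraMap_eq_smul_one (π r)]
      simp
    rw [factor]
    exact Ideal.mul_mem_left _ _ (Ideal.mem_map_of_mem _ (sub_algebraMap_mem_ker π r))
  | add x y hx hy =>
    rw [map_add, TensorProduct.add_tmul, add_sub_add_comm]
    exact add_mem hx hy

theorem ker_reduceAlong_le (π : R →ₐ[k] k) :
    RingHom.ker (reduceAlong A π) ≤ (RingHom.ker π).map (algebraMap R (A ⊗[k] R)) := by
  intro x hx
  simpa [RingHom.mem_ker.mp hx] using sub_reduceAlong_tmul_one_mem π x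

theorem apply_algebraMap_eq_of_map_ker_le_ker {B : Type*} [CommRing B] [Algebra R B] [Algebra k B]
    [IsScalarTower k R B] {π : R →ₐ[k] k} {q : B →ₐ[k] A}
    (h : (RingHom.ker π).map (algebraMap R B) ≤ RingHom.ker q) (r : R) :
    q (algebraMap R B r) = algebraMap k A (π r) := by
  have := h (Ideal.mem_map_of_mem _ (sub_algebraMap_mem_ker π r))
  rwa [RingHom.mem_ker, map_sub, map_sub, ← IsScalarTower.algebraMap_apply, AlgHom.commutes,
    sub_eq_zero] at this

instance formallySmooth_rightAlgebra [Algebra.FormallySmooth k A] :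
    Algebra.FormallySmooth R (A ⊗[k] R) :=
  .of_equiv (Algebra.TensorProduct.commRight k R A)

theorem statement11_general [Algebra.FormallySmooth k A] {B : Type*} [CommRing B] [Algebra R B]
    [Algebra k B] [IsScalarTower k R B] [Module.Flat R B] (π : R →ₐ[k] k)
    (hπ : IsNilpotent (RingHom.ker π)) (q : B →ₐ[k] A) (hq : Function.Surjective q)
    (hker : RingHom.ker q = (RingHom.ker π).map (algebraMap R B)) :
    ∃ φ : B ≃ₐ[R] A ⊗[k] R, ∀ b, reduceAlong A π (φ b) = q b := by
  let : Algebra R A := ((algebraMap k A).comp (π : R →+* k)).toAlgebra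
  let p : A ⊗[k] R →ₐ[R] A :=
    { reduceAlong A π with
      commutes' := fun r => (reduceAlong_tmul π 1 r).trans (Algebra.algebraMap_eq_smul_one _).symm }
  let q' : B →ₐ[R] A :=
    { q with commutes' := apply_algebraMap_eq_of_map_ker_le_ker hker.ge }
  obtain ⟨φ, hφ⟩ := exists_algEquiv_of_formallySmooth_of_flat hπ (p := p) (q := q')
    (reduceAlong_surjective π) hq (ker_reduceAlong_le π) hker.le
  refine ⟨φ.symm, fun b => ?_⟩
  calc reduceAlong A π (φ.symm b) = q (φ (φ.symm b)) := (hφ _).symm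
    _ = q b := by rw [φ.apply_symm_apply]

end Augmented

theorem ker_algEquiv_comp_mkₐ {k A B : Type*} [CommRing k] [CommRing A] [CommRing B] [Algebra k A]
    [Algebra k B] {I : Ideal B} (e : (B ⧸ I) ≃ₐ[k] A) :
    RingHom.ker (e.toAlgHom.comp (Ideal.Quotient.mkₐ k I)) = I := by
  ext b
  simp [RingHom.mem_ker, Ideal.Quotient.eq_zero_iff_mem]

theorem ker_fstHom_eq_span_eps (k : Type*) [CommRing k] :
    RingHom.ker (TrivSqZeroExt.fstHom k k k) = Ideal.span {DualNumber.eps} := by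
  ext x
  rw [RingHom.mem_ker, Ideal.mem_span_singleton]
  exact DualNumber.fst_eq_zero_iff_eps_dvd

theorem isNilpotent_ker_fstHom (k : Type*) [CommRing k] :
    IsNilpotent (RingHom.ker (TrivSqZeroExt.fstHom k k k)) :=
  ⟨2, TrivSqZeroExt.kerIdeal_sq k k⟩

theorem reduceEps_eq_reduceAlong (k A : Type u) [CommRing k] [CommRing A] [Algebra k A] :
    reduceEps k A = reduceAlong A (TrivSqZeroExt.fstHom k k k) := by
  apply Algebra.TensorProduct.ext'
  intro a r
  simp [reduceEps, reduceAlong_tmul]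

/-- Let `k` be a commutative ring, `A` a formally smooth commutative
`k`-algebra, and `k[ε]` the dual numbers. Let `B` be a commutative `k[ε]`-algebra, flat as
a `k[ε]`-module, equipped with an isomorphism of `k`-algebras `B/εB ≅ A`. Then there is an
isomorphism of `k[ε]`-algebras `B ≅ A ⊗_k k[ε]` compatible with the given identification
modulo `ε`: a formally smooth affine algebra is rigid. -/
theorem statement11 (k : Type u) [CommRing k] (A : Type u) [CommRing A] [Algebra k A]
    [Algebra.FormallySmooth k A]
    (B : Type u) [CommRing B] [Algebra (DualNumber k) B] [Algebra k B]
    [IsScalarTower k (DualNumber k) B] [Module.Flat (DualNumber k) B]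
    (e : (B ⧸ Ideal.span {algebraMap (DualNumber k) B DualNumber.eps}) ≃ₐ[k] A) :
    ∃ φ : B ≃ₐ[DualNumber k] A ⊗[k] DualNumber k,
      ∀ b : B, reduceEps k A (φ b) =
        e (Ideal.Quotient.mk (Ideal.span {algebraMap (DualNumber k) B DualNumber.eps}) b) := by
  rw [reduceEps_eq_reduceAlong]
  exact statement11_general _ (isNilpotent_ker_fstHom k)
    (e.toAlgHom.comp (Ideal.Quotient.mkₐ k _))
    (e.surjective.comp (Ideal.Quotient.mkₐ_surjective k _))
    (by rw [ker_algEquiv_comp_mkₐ, ker_fstHom_eq_span_eps, Ideal.map_span, Set.image_singleton])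
end
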